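/- If N is an integer with N ≥ [r], then the space 𝓕^N(𝒪_F,J,(d_σ)_{σ∈S∖J}) is dense in C^r(𝒪_F,J',(d_σ)_{σ∈S∖J'}). -/

import Mathlib

/-!
Setting (cf. the paper's notations): `O` plays the role of the ring of integers `𝒪_F` of a
finite extension `F` of `ℚ_p`, `E` is the coefficient field (a finite extension of `ℚ_p`
with its p-adic absolute value, normalized by `|x| = p^{-val_F(x)}`, `val_F(p) = [F:ℚ_p]`),
`S` is the (finite) set of `ℚ_p`-algebra embeddings `F ↪ E`, restricted here to `O`,
`ν : O → ℝ` is the absolute value on `O` (the common restriction of the norm of `E` along any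
embedding), `ϖ` is a fixed uniformizer with `ν ϖ = q⁻¹` where `q = p^f` is the cardinality
of the residue field, and `u * ϖ ^ e = p` records the ramification index `e`.
-/

open scoped Classical

noncomputable section

namespace CrPaper

structure Setting (S O E : Type*) [Fintype S] [CommRing O] [NormedField E] where
  q : ℝ
  p : ℕ
  fdeg : ℕ
  hp : p.Prime
  hfdeg : 0 < fdeg
  hq : q = (p : ℝ) ^ fdeg
  emb : S → O →+* E
  emb_inj : ∀ s, Function.Injective (emb s)
  emb_distinct : Function.Injective emb
  ν : O → ℝ
  norm_emb : ∀ (s) (z : O), ‖emb s z‖ = ν z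
  norm_le_one : ∀ (s) (z : O), ‖emb s z‖ ≤ 1
  norm_add_max : ∀ x y : E, ‖x + y‖ ≤ max ‖x‖ ‖y‖
  ϖ : O
  ν_ϖ : ν ϖ = q⁻¹
  mem_ball_iff : ∀ (y : O) (n : ℕ), (∃ z, y = ϖ ^ n * z) ↔ ν y ≤ q⁻¹ ^ n
  ram : ∃ (e : ℕ) (u : O), 0 < e ∧ IsUnit u ∧ u * ϖ ^ e = (p : O)

variable {S O E : Type*} [Fintype S] [DecidableEq S] [CommRing O] [IsDomain O]
  [NormedField E] [CompleteSpace E] [CharZero E]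

/-- The total weight `|i| = ∑ i_σ` of a multi-index. -/
def wt (i : S → ℕ) : ℕ := ∑ s, i s

/-- `i! = ∏ i_σ!` for a multi-index. -/
def mfact (i : S → ℕ) : ℕ := ∏ s, (i s).factorial

/-- The (finite) set `I_{≤N}` of multi-indices of total weight `≤ N`. -/
def Idx (S : Type*) [Fintype S] [DecidableEq S] (N : ℕ) : Finset (S → ℕ) :=
  (Fintype.piFinset fun _ : S => Finset.range (N + 1)).filter fun i => wt i ≤ N

/-- `z^i = ∏_σ σ(z)^{i_σ}`. -/
def mpow (St : Setting S O E) (z : O) (i : S → ℕ) : E := ∏ s, St.emb s z ^ i s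

/-- The Taylor remainder `ε_{f,N}(x,y) = f(x+y) − ∑_{|i|≤N} D_i f(x) y^i / i!`. -/
def epsTay (St : Setting S O E) (N : ℕ) (f : O → E) (D : (S → ℕ) → O → E) (x y : O) : E :=
  f (x + y) - ∑ i ∈ Idx S N, D i x * mpow St y i / (mfact i : E)

/-- `f` is of class `C^r` with the family of bounded functions `D` witnessing the
definition: all `D_i` (`|i| ≤ ⌊r⌋`) are bounded and
`C_{f,r}(h) = sup_{x ∈ O, y ∈ ϖ^h O} |ε_{f,⌊r⌋}(x,y)| q^{rh} → 0` as `h → ∞`. -/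
def IsCrWith (St : Setting S O E) (r : ℝ) (f : O → E) (D : (S → ℕ) → O → E) : Prop :=
  (∀ i ∈ Idx S ⌊r⌋₊, ∃ C : ℝ, ∀ x : O, ‖D i x‖ ≤ C) ∧
  ∀ ε : ℝ, 0 < ε → ∃ M : ℕ, ∀ h : ℕ, M ≤ h → ∀ x z : O,
    ‖epsTay St ⌊r⌋₊ f D x (St.ϖ ^ h * z)‖ * St.q ^ (r * (h : ℝ)) ≤ ε

/-- `f` is of class `C^r`. -/
def IsCr (St : Setting S O E) (r : ℝ) (f : O → E) : Prop :=
  ∃ D, IsCrWith St r f D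

/-- The `C^r`-norm of `f` (relative to the — unique — family `D`):
`max( sup_{i,x} |D_i f(x)/i!| , sup_{x,y} |ε_{f,⌊r⌋}(x,y)|/|y|^r )`. -/
def CrNorm (St : Setting S O E) (r : ℝ) (f : O → E) (D : (S → ℕ) → O → E) : ℝ :=
  max (⨆ i : (Idx S ⌊r⌋₊), ⨆ x : O, ‖D i.1 x / (mfact i.1 : E)‖)
      (⨆ x : O, ⨆ y : O, ‖epsTay St ⌊r⌋₊ f D x y‖ / St.ν y ^ r)

/-- `J' = J ∪ {σ ∈ S∖J : d_σ + 1 > r}`. -/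
def Jp (J : Set S) (d : S → ℕ) (r : ℝ) : Set S := J ∪ {s | r < (d s : ℝ) + 1}

/-- `𝓕^N(O, J, (d_σ)_{σ∈S∖J})`: locally `ℚ_p`-polynomial functions of total degree `≤ N`
which are of degree `≤ d_σ` in `σ(z)` for every `σ ∈ S∖J`. -/
def FNJ (St : Setting S O E) (N : ℕ) (J : Set S) (d : S → ℕ) : Set (O → E) :=
  {g | ∃ h : ℕ, ∀ a : O, ∃ c : (S → ℕ) → E, ∀ y : O,
      g (a + St.ϖ ^ h * y) =
        ∑ i ∈ (Idx S N).filter (fun i => ∀ s ∉ J, i s ≤ d s),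
          c i * mpow St (St.ϖ ^ h * y) i}

/-!
On each class modulo `ϖ^h` replace `f` by its Taylor polynomial at a representative of the class.
The error is controlled by one fact: the monomials `z^i` are pairwise distinct characters of `O`,
hence linearly independent (Dedekind), so the coefficients of a polynomial of bounded degree are
bounded by its supremum norm on a ball, with the expected scaling in the radius. Applied to
`ε(x, y + w) - ε(x + y, w)`, which is a polynomial in `w`, this bounds the Taylor remainders of
all derivatives of `f`. The same estimate shows that `D_e f = 0` forces `D_i f = 0` for all
`i ≥ e`, so that the Taylor polynomials satisfy the degree conditions.

The Taylor remainders of `f` and of the error agree at displacements `y ∈ ϖ^h O`; for the other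
`y`, the bounds on the derivatives of the error at radius `|ϖ|^h` only improve at radius `|y|`,
since their orders are at most `r`.
-/

section MonomialCharacters

open Polynomial

variable {ι R K : Type*} [Fintype ι] [Semiring R] [CommRing K]

lemma eval_zero_derivative_prod_one_add_C_mul_X_pow (a : ι → K) (i : ι → ℕ) :
    (derivative (∏ s, (1 + C (a s) * X) ^ i s)).eval 0 = ∑ s, (i s : K) * a s := by
  simp [derivative_prod_finset, eval_finsetSum, eval_prod, derivative_pow]

variable [IsDomain K] [CharZero K]

/- Evaluating at `1 + n w` for `n : ℕ` turns the hypothesis into an identity of polynomials in `n`;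
compare the derivatives at `0`. -/
lemma sum_mul_eq_of_prod_pow_eq {σ : ι → R →+* K} {i j : ι → ℕ}
    (h : ∀ z, ∏ s, σ s z ^ i s = ∏ s, σ s z ^ j s) (w : R) :
    ∑ s, (i s : K) * σ s w = ∑ s, (j s : K) * σ s w := by
  have hpoly : (∏ s, (1 + C (σ s w) * X) ^ i s : K[X]) = ∏ s, (1 + C (σ s w) * X) ^ j s := by
    refine eq_of_infinite_eval_eq _ _ <|
      (Set.infinite_range_of_injective (Nat.cast_injective (R := K))).mono ?_
    rintro _ ⟨n, rfl⟩
    simpa [eval_prod] using h (1 + w * n)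
  simp only [← eval_zero_derivative_prod_one_add_C_mul_X_pow, hpoly]

lemma injective_prod_monoidHom_pow {σ : ι → R →+* K} (hσ : Function.Injective σ) :
    Function.Injective fun i : ι → ℕ ↦ ∏ s, (σ s : R →* K) ^ i s := by
  intro i j hij
  have hsum := sum_mul_eq_of_prod_pow_eq (σ := σ) (i := i) (j := j) fun z ↦ by
    simpa using DFunLike.congr_fun hij z
  have hli : LinearIndependent K fun s ↦ (σ s : R → K) :=
    (linearIndependent_monoidHom R K).comp (fun s ↦ (σ s : R →* K)) fun s t hst ↦
      hσ (RingHom.ext fun z ↦ DFunLike.congr_fun (F := R →* K) hst z)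
  have hcoeff := Fintype.linearIndependent_iff.1 hli (fun s ↦ (i s : K) - j s) <| by
    ext w
    simpa [sub_mul, sub_eq_zero] using hsum w
  funext s
  exact_mod_cast sub_eq_zero.1 (hcoeff s)

theorem linearIndependent_prod_pow {σ : ι → R →+* K} (hσ : Function.Injective σ) :
    LinearIndependent K fun (i : ι → ℕ) (z : R) ↦ ∏ s, σ s z ^ i s := by
  convert (linearIndependent_monoidHom R K).comp _ (injective_prod_monoidHom_pow hσ) using 3
  simp

end MonomialCharacters

section CoefficientBounds

variable {ι X K : Type*} [Fintype ι]

lemma exists_finsupp_sum_eq_coeff [Field K] {v : ι → X → K} (hv : LinearIndependent K v) (i : ι) :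
    ∃ l : X →₀ K, ∀ c : ι → K, (l.sum fun x a ↦ a * ∑ k, c k * v k x) = c i := by
  let ev (x : X) : (ι → K) →ₗ[K] K := Fintype.linearCombination K fun k ↦ v k x
  have hker : ⨅ x, (ev x).ker ≤ (LinearMap.proj i : (ι → K) →ₗ[K] K).ker := by
    intro c hc
    refine Fintype.linearIndependent_iff.1 hv c (funext fun x ↦ ?_) i
    simpa [ev, Fintype.linearCombination_apply] using (Submodule.mem_iInf _).1 hc x
  obtain ⟨l, hl⟩ := Finsupp.mem_span_range_iff_exists_finsupp.1
    (FiniteDimensional.mem_span_of_iInf_ker_le_ker hker)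
  refine ⟨l, fun c ↦ ?_⟩
  simpa [Finsupp.sum, ev, Fintype.linearCombination_apply] using LinearMap.congr_fun hl c

theorem exists_norm_coeff_le_of_linearIndependent [NormedField K] {v : ι → X → K}
    (hv : LinearIndependent K v) :
    ∃ C > 0, ∀ (c : ι → K) (b : ℝ), (∀ x, ‖∑ k, c k * v k x‖ ≤ b) → ∀ i, ‖c i‖ ≤ C * b := by
  choose l hl using exists_finsupp_sum_eq_coeff hv
  refine ⟨∑ i, ∑ x ∈ (l i).support, ‖l i x‖ + 1, by positivity, fun c b hb i ↦ ?_⟩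
  obtain ⟨x₀, -⟩ := Function.ne_iff.1 (hv.ne_zero i)
  have hb₀ : 0 ≤ b := (norm_nonneg _).trans (hb x₀)
  calc
    ‖c i‖ = ‖∑ x ∈ (l i).support, l i x * ∑ k, c k * v k x‖ := by rw [← hl i c, Finsupp.sum]
    _ ≤ ∑ x ∈ (l i).support, ‖l i x‖ * b :=
      norm_sum_le_of_le _ fun x _ ↦ (norm_mul _ _).trans_le (by gcongr; exact hb x)
    _ = (∑ x ∈ (l i).support, ‖l i x‖) * b := by rw [Finset.sum_mul]
    _ ≤ _ := by
      gcongr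
      refine (Finset.single_le_sum (f := fun i ↦ ∑ x ∈ (l i).support, ‖l i x‖)
        (fun _ _ ↦ by positivity) (Finset.mem_univ i)).trans ?_
      linarith

end CoefficientBounds

section Rescaling

lemma mul_pow_le_mul_rpow_of_le {a b r t v : ℝ} {n : ℕ} (ht : 0 < t) (hb : 0 ≤ b)
    (hn : (n : ℝ) ≤ r) (hv : t ≤ v) (h : a * t ^ n ≤ b * t ^ r) : a * v ^ n ≤ b * v ^ r := by
  have hv₀ := ht.trans_le hv
  have hle {u : ℝ} (hu : 0 < u) : a * u ^ n ≤ b * u ^ r ↔ a ≤ b * u ^ (r - n) := by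
    rw [Real.rpow_sub_natCast hu.ne', ← mul_div_assoc, le_div_iff₀ (by positivity)]
  rw [hle ht] at h
  rw [hle hv₀]
  exact h.trans (by gcongr)

lemma mul_rpow_mul_natCast_le_iff {q : ℝ} (hq : 0 < q) {a b r : ℝ} {n : ℕ} :
    a * q ^ (r * n) ≤ b ↔ a ≤ b * (q⁻¹ ^ n) ^ r := by
  rw [← le_div_iff₀ (by positivity), div_eq_mul_inv, inv_pow, Real.inv_rpow (by positivity),
    mul_comm r, Real.rpow_mul hq.le, Real.rpow_natCast]

end Rescaling

section MultiIndices

omit [DecidableEq S] in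
lemma apply_le_wt (i : S → ℕ) (s : S) : i s ≤ wt i :=
  Finset.single_le_sum (fun _ _ ↦ Nat.zero_le _) (Finset.mem_univ s)

omit [DecidableEq S] in
lemma wt_mono : Monotone (wt : (S → ℕ) → ℕ) :=
  fun _ _ h ↦ Finset.sum_le_sum fun s _ ↦ h s

lemma mem_Idx {N : ℕ} {i : S → ℕ} : i ∈ Idx S N ↔ wt i ≤ N := by
  simp only [Idx, Finset.mem_filter, Fintype.mem_piFinset, Finset.mem_range,
    and_iff_right_iff_imp]
  exact fun h s ↦ Nat.lt_succ_of_le ((apply_le_wt i s).trans h)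

lemma zero_mem_Idx (N : ℕ) : (0 : S → ℕ) ∈ Idx S N := mem_Idx.2 (by simp [wt])

lemma wt_le_of_mem_Idx_floor {r : ℝ} (hr : 0 ≤ r) {i : S → ℕ} (hi : i ∈ Idx S ⌊r⌋₊) :
    (wt i : ℝ) ≤ r :=
  (Nat.le_floor_iff hr).1 (mem_Idx.1 hi)

omit [DecidableEq S] in
lemma mfact_ne_zero {K : Type*} [Semiring K] [CharZero K] (i : S → ℕ) : (mfact i : K) ≠ 0 :=
  Nat.cast_ne_zero.2 (Finset.prod_ne_zero_iff.2 fun s _ ↦ (i s).factorial_ne_zero)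

/-- The multi-index binomial coefficient `∏_σ (i_σ choose j_σ)`; it is nonzero exactly when
`j ≤ i`. -/
def mchoose (i j : S → ℕ) : ℕ := ∏ s, (i s).choose (j s)

omit [DecidableEq S] in
lemma mchoose_zero_right (i : S → ℕ) : mchoose i 0 = 1 := by simp [mchoose]

omit [DecidableEq S] in
lemma mchoose_ne_zero_iff {i j : S → ℕ} : mchoose i j ≠ 0 ↔ j ≤ i := by
  simp [mchoose, Finset.prod_eq_zero_iff, Nat.choose_eq_zero_iff, Pi.le_def]

omit [DecidableEq S] in
lemma mchoose_eq_zero {i j : S → ℕ} (h : ¬ j ≤ i) : mchoose i j = 0 := by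
  simpa using mt mchoose_ne_zero_iff.1 h

end MultiIndices

section General

omit [IsDomain O] [CompleteSpace E]

section ArbitraryCharacteristic

omit [CharZero E]

section Setting

omit [DecidableEq S]

lemma Setting.one_lt_q (St : Setting S O E) : 1 < St.q := by
  rw [St.hq]
  exact one_lt_pow₀ (by exact_mod_cast St.hp.one_lt) St.hfdeg.ne'

lemma Setting.q_pos (St : Setting S O E) : 0 < St.q := zero_lt_one.trans St.one_lt_q

lemma Setting.inv_q_pow_pos (St : Setting S O E) (n : ℕ) : 0 < St.q⁻¹ ^ n :=
  pow_pos (inv_pos.2 St.q_pos) n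

lemma Setting.inv_q_pow_le_one (St : Setting S O E) (n : ℕ) : St.q⁻¹ ^ n ≤ 1 :=
  pow_le_one₀ (inv_pos.2 St.q_pos).le (inv_le_one_of_one_le₀ St.one_lt_q.le)

lemma Setting.isUltrametricDist (St : Setting S O E) : IsUltrametricDist E :=
  IsUltrametricDist.isUltrametricDist_of_forall_norm_add_le_max_norm St.norm_add_max

lemma Setting.norm_sub_le_max (St : Setting S O E) (x y : E) : ‖x - y‖ ≤ max ‖x‖ ‖y‖ := by
  simpa [sub_eq_add_neg] using St.norm_add_max x (-y)

lemma Setting.uniformizer_pow_dvd_iff (St : Setting S O E) {y : O} {n : ℕ} :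
    St.ϖ ^ n ∣ y ↔ St.ν y ≤ St.q⁻¹ ^ n :=
  St.mem_ball_iff y n

lemma Setting.ν_le_one (St : Setting S O E) (y : O) : St.ν y ≤ 1 := by
  simpa using (St.uniformizer_pow_dvd_iff (n := 0)).1 (by simp : St.ϖ ^ 0 ∣ y)

lemma mpow_zero_index (St : Setting S O E) (y : O) : mpow St y 0 = 1 := by simp [mpow]

lemma mpow_zero_left (St : Setting S O E) {i : S → ℕ} (hi : i ≠ 0) : mpow St 0 i = 0 := by
  obtain ⟨s, hs⟩ := Function.ne_iff.1 hi
  exact Finset.prod_eq_zero (Finset.mem_univ s) (by rw [map_zero, zero_pow hs])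

lemma mpow_mul (St : Setting S O E) (y z : O) (i : S → ℕ) :
    mpow St (y * z) i = mpow St y i * mpow St z i := by
  simp [mpow, mul_pow, Finset.prod_mul_distrib]

lemma mpow_add_index (St : Setting S O E) (y : O) (i j : S → ℕ) :
    mpow St y (i + j) = mpow St y i * mpow St y j := by
  simp [mpow, pow_add, Finset.prod_mul_distrib]

lemma norm_mpow (St : Setting S O E) (y : O) (i : S → ℕ) :
    ‖mpow St y i‖ = St.ν y ^ wt i := by
  simp [mpow, wt, St.norm_emb, Finset.prod_pow_eq_pow_sum]

lemma norm_mpow_uniformizer_pow (St : Setting S O E) (n : ℕ) (i : S → ℕ) :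
    ‖mpow St (St.ϖ ^ n) i‖ = (St.q⁻¹ ^ n) ^ wt i := by
  simp [mpow, wt, St.norm_emb, St.ν_ϖ, Finset.prod_pow_eq_pow_sum]

lemma norm_mpow_le_one (St : Setting S O E) (y : O) (i : S → ℕ) : ‖mpow St y i‖ ≤ 1 := by
  rw [mpow, norm_prod]
  refine Finset.prod_le_one (fun _ _ ↦ norm_nonneg _) fun s _ ↦ ?_
  rw [norm_pow]
  exact pow_le_one₀ (norm_nonneg _) (St.norm_le_one s y)

lemma norm_mpow_le_of_dvd (St : Setting S O E) {n : ℕ} {y : O} (hy : St.ϖ ^ n ∣ y) (i : S → ℕ) :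
    ‖mpow St y i‖ ≤ (St.q⁻¹ ^ n) ^ wt i := by
  obtain ⟨z, rfl⟩ := hy
  rw [mpow_mul, norm_mul, norm_mpow_uniformizer_pow]
  exact mul_le_of_le_one_right (pow_nonneg (St.inv_q_pow_pos n).le _) (norm_mpow_le_one St z i)

end Setting

lemma mpow_add (St : Setting S O E) (y w : O) (i : S → ℕ) :
    mpow St (y + w) i =
      ∑ j ∈ Finset.Iic i, (mchoose i j : E) * mpow St y (i - j) * mpow St w j := by
  have hbinom (s : S) : St.emb s (y + w) ^ i s = ∑ k ∈ Finset.Iic (i s),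
      ((i s).choose k : E) * St.emb s y ^ (i s - k) * St.emb s w ^ k := by
    rw [map_add, add_comm, add_pow, ← Nat.Iio_eq_range]
    exact Finset.sum_congr (by ext; simp) fun k _ ↦ by ring
  simp only [mpow, hbinom, Finset.prod_univ_sum, mchoose, Nat.cast_prod, Pi.sub_apply,
    Finset.prod_mul_distrib]
  rfl

lemma mpow_add_eq_sum_Idx (St : Setting S O E) {N : ℕ} (y w : O) {i : S → ℕ} (hi : i ∈ Idx S N) :
    mpow St (y + w) i =
      ∑ j ∈ Idx S N, (mchoose i j : E) * mpow St y (i - j) * mpow St w j := by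
  rw [mpow_add]
  refine Finset.sum_subset (fun j hj ↦ mem_Idx.2 ?_) fun j _ hj ↦ ?_
  · exact (wt_mono (Finset.mem_Iic.1 hj)).trans (mem_Idx.1 hi)
  · simp [mchoose_eq_zero (mt Finset.mem_Iic.2 hj)]

section TaylorExpansion

/-- The `j`-th derivative, divided by `j!`, of the Taylor polynomial `∑_{|i|≤N} D_i(x) y^i / i!`
of the jet `D` at `x`, evaluated at the displacement `y` from `x`. -/
def taylorDeriv (St : Setting S O E) (N : ℕ) (D : (S → ℕ) → O → E) (j : S → ℕ) (x y : O) : E :=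
  ∑ i ∈ Idx S N, D i x / (mfact i : E) * ((mchoose i j : E) * mpow St y (i - j))

/-- The Taylor remainder of the `j`-th member of the jet `D`, divided by `j!`. -/
def derivRem (St : Setting S O E) (N : ℕ) (D : (S → ℕ) → O → E) (j : S → ℕ) (x y : O) : E :=
  D j (x + y) / (mfact j : E) - taylorDeriv St N D j x y

variable (St : Setting S O E) (N : ℕ) (f : O → E) (D : (S → ℕ) → O → E)

lemma taylorDeriv_zero_index (x y : O) :
    taylorDeriv St N D 0 x y = ∑ i ∈ Idx S N, D i x / (mfact i : E) * mpow St y i := by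
  simp [taylorDeriv, mchoose_zero_right]

lemma taylorDeriv_zero_index_zero (x : O) : taylorDeriv St N D 0 x 0 = D 0 x := by
  rw [taylorDeriv_zero_index, Finset.sum_eq_single_of_mem 0 (zero_mem_Idx N) fun i _ hi ↦ by
    rw [mpow_zero_left St hi, mul_zero]]
  simp [mpow_zero_index, mfact]

lemma taylorDeriv_zero_index_add (x y w : O) :
    taylorDeriv St N D 0 x (y + w) = ∑ j ∈ Idx S N, taylorDeriv St N D j x y * mpow St w j := by
  rw [taylorDeriv_zero_index]
  simp only [taylorDeriv, Finset.sum_mul]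
  rw [Finset.sum_comm]
  refine Finset.sum_congr rfl fun i hi ↦ ?_
  rw [mpow_add_eq_sum_Idx St y w hi, Finset.mul_sum]
  exact Finset.sum_congr rfl fun j _ ↦ by ring

lemma taylorDeriv_mul_mpow (j : S → ℕ) (x y : O) :
    taylorDeriv St N D j x y * mpow St y j =
      ∑ i ∈ Idx S N, D i x / (mfact i : E) * (mchoose i j : E) * mpow St y i := by
  rw [taylorDeriv, Finset.sum_mul]
  refine Finset.sum_congr rfl fun i _ ↦ ?_
  by_cases hji : j ≤ i
  · have hsplit : mpow St y i = mpow St y (i - j) * mpow St y j := by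
      rw [← mpow_add_index, tsub_add_cancel_of_le hji]
    rw [hsplit]
    ring
  · simp [mchoose_eq_zero hji]

lemma epsTay_eq_sub_taylorDeriv (x y : O) :
    epsTay St N f D x y = f (x + y) - taylorDeriv St N D 0 x y := by
  simp only [epsTay, taylorDeriv_zero_index, mul_div_right_comm]

lemma epsTay_add_sub_epsTay (x y w : O) :
    epsTay St N f D x (y + w) - epsTay St N f D (x + y) w =
      ∑ j ∈ Idx S N, derivRem St N D j x y * mpow St w j := by
  simp only [epsTay_eq_sub_taylorDeriv, taylorDeriv_zero_index_add St N D x y w,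
    taylorDeriv_zero_index St N D (x + y), derivRem, sub_mul, Finset.sum_sub_distrib, add_assoc]
  ring

end TaylorExpansion

/-- The bound `|ε_{f,⌊r⌋}(x, y)| ≤ δ |ϖ|^{rn}` for all `n ≥ h` and `y ∈ ϖ^n O`; in the notation of
the paper, `C_{f,r}(n) ≤ δ` for all `n ≥ h`. -/
def RemainderBound (St : Setting S O E) (r : ℝ) (f : O → E) (D : (S → ℕ) → O → E) (h : ℕ)
    (δ : ℝ) : Prop :=
  ∀ n, h ≤ n → ∀ x y, St.ϖ ^ n ∣ y → ‖epsTay St ⌊r⌋₊ f D x y‖ ≤ δ * (St.q⁻¹ ^ n) ^ r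

section CrFunctions

variable {St : Setting S O E} {r : ℝ} {f : O → E} {D : (S → ℕ) → O → E} {h : ℕ} {δ : ℝ}

lemma RemainderBound.nonneg (hb : RemainderBound St r f D h δ) : 0 ≤ δ :=
  nonneg_of_mul_nonneg_left ((norm_nonneg _).trans (hb h le_rfl 0 0 (dvd_zero _)))
    (Real.rpow_pos_of_pos (St.inv_q_pow_pos h) r)

lemma IsCrWith.exists_remainderBound (hf : IsCrWith St r f D) (hδ : 0 < δ) :
    ∃ h, RemainderBound St r f D h δ := by
  obtain ⟨h, hh⟩ := hf.2 δ hδ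
  refine ⟨h, fun n hn x y ⟨z, hz⟩ ↦ ?_⟩
  rw [hz]
  exact (mul_rpow_mul_natCast_le_iff St.q_pos).1 (hh n hn x z)

lemma IsCrWith.epsTay_eq_zero_of_forall_dvd (hf : IsCrWith St r f D) (hr : 0 ≤ r) {y : O}
    (hy : ∀ n : ℕ, St.ϖ ^ n ∣ y) (x : O) : epsTay St ⌊r⌋₊ f D x y = 0 := by
  refine norm_le_zero_iff.1 (le_of_forall_pos_le_add fun δ hδ ↦ ?_)
  obtain ⟨h, hb⟩ := hf.exists_remainderBound hδ
  rw [zero_add]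
  exact (hb h le_rfl x y (hy h)).trans (mul_le_of_le_one_right hδ.le
    (Real.rpow_le_one (St.inv_q_pow_pos h).le (St.inv_q_pow_le_one h) hr))

lemma IsCrWith.deriv_zero_index (hf : IsCrWith St r f D) (hr : 0 ≤ r) (x : O) : D 0 x = f x := by
  have hzero := hf.epsTay_eq_zero_of_forall_dvd hr (fun n ↦ dvd_zero _) x
  rw [epsTay_eq_sub_taylorDeriv, taylorDeriv_zero_index_zero, add_zero] at hzero
  exact (sub_eq_zero.1 hzero).symm

lemma RemainderBound.norm_epsTay_div_le_of_dvd (hb : RemainderBound St r f D h δ)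
    (hf : IsCrWith St r f D) (hr : 0 ≤ r) {y : O} (hy : St.ϖ ^ h ∣ y) (x : O) :
    ‖epsTay St ⌊r⌋₊ f D x y‖ / St.ν y ^ r ≤ St.q ^ r * δ := by
  have hq := St.q_pos
  have hδ := hb.nonneg
  obtain hν | hν := le_or_gt (St.ν y) 0
  · have hzero := hf.epsTay_eq_zero_of_forall_dvd hr
      (fun n ↦ St.uniformizer_pow_dvd_iff.2 (hν.trans (St.inv_q_pow_pos n).le)) x
    rw [hzero, norm_zero, zero_div]
    positivity
  obtain ⟨n, hn, hn'⟩ := exists_nat_pow_near_of_lt_one hν (St.ν_le_one y) (inv_pos.2 hq)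
    (inv_lt_one_of_one_lt₀ St.one_lt_q)
  have hhn : h ≤ n := Nat.lt_succ_iff.1 <| (pow_lt_pow_iff_right_of_lt_one₀ (inv_pos.2 hq)
    (inv_lt_one_of_one_lt₀ St.one_lt_q)).1 (hn.trans_le (St.uniformizer_pow_dvd_iff.1 hy))
  have hscale : St.q⁻¹ ^ n ≤ St.q * St.ν y := by
    rw [← inv_mul_le_iff₀ hq, ← pow_succ']
    exact hn.le
  rw [div_le_iff₀ (by positivity)]
  calc
    ‖epsTay St ⌊r⌋₊ f D x y‖ ≤ δ * (St.q⁻¹ ^ n) ^ r :=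
      hb n hhn x y (St.uniformizer_pow_dvd_iff.2 hn')
    _ ≤ δ * (St.q * St.ν y) ^ r := by gcongr
    _ = St.q ^ r * δ * St.ν y ^ r := by rw [Real.mul_rpow hq.le hν.le]; ring

end CrFunctions

section LocalTaylor

/-- A representative of the residue class of `x` modulo `a`, the same for all elements of the
class. -/
def residueRep {R : Type*} [CommRing R] (a x : R) : R :=
  (Ideal.Quotient.mk (Ideal.span {a}) x).out

lemma dvd_sub_residueRep {R : Type*} [CommRing R] (a x : R) : a ∣ x - residueRep a x := by
  rw [← Ideal.mem_span_singleton, ← Ideal.Quotient.eq]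
  exact (Ideal.Quotient.mk_out _).symm

lemma residueRep_add_of_dvd {R : Type*} [CommRing R] {a y : R} (hy : a ∣ y) (x : R) :
    residueRep a (x + y) = residueRep a x := by
  have hmk : Ideal.Quotient.mk (Ideal.span {a}) (x + y) = Ideal.Quotient.mk (Ideal.span {a}) x := by
    rwa [Ideal.Quotient.eq, add_sub_cancel_left, Ideal.mem_span_singleton]
  rw [residueRep, hmk, residueRep]

/-- The `j`-th derivative, divided by `j!`, of the locally polynomial function which on each class
modulo `ϖ^h` is the Taylor polynomial of the jet `D` at the chosen representative. The index
`j = 0` gives the locally polynomial function itself, which approximates `f`. -/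
def localTaylor (St : Setting S O E) (N : ℕ) (D : (S → ℕ) → O → E) (h : ℕ) (j : S → ℕ) (x : O) :
    E :=
  taylorDeriv St N D j (residueRep (St.ϖ ^ h) x) (x - residueRep (St.ϖ ^ h) x)

/-- The jet of the approximation error `f - localTaylor St N D h 0`, where `D` is the jet of `f`. -/
def errDeriv (St : Setting S O E) (N : ℕ) (D : (S → ℕ) → O → E) (h : ℕ) (j : S → ℕ) (x : O) : E :=
  D j x - (mfact j : E) * localTaylor St N D h j x

variable {St : Setting S O E} {N h : ℕ} {f : O → E} {D : (S → ℕ) → O → E}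

lemma localTaylor_zero_index_add {y : O} (hy : St.ϖ ^ h ∣ y) (x : O) :
    localTaylor St N D h 0 (x + y) = ∑ j ∈ Idx S N, localTaylor St N D h j x * mpow St y j := by
  rw [localTaylor, residueRep_add_of_dvd hy, add_sub_right_comm, taylorDeriv_zero_index_add]
  rfl

lemma localTaylor_eq_zero_of_forall_le {j : S → ℕ} (hD : ∀ i ∈ Idx S N, j ≤ i → D i = 0) (x : O) :
    localTaylor St N D h j x = 0 := by
  refine Finset.sum_eq_zero fun i hi ↦ ?_
  by_cases hji : j ≤ i
  · simp [hD i hi hji]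
  · simp [mchoose_eq_zero hji]

lemma localTaylor_mem_FNJ {J : Set S} {d : S → ℕ} {M : ℕ} (hNM : N ≤ M)
    (hD : ∀ i ∈ Idx S N, ∀ s ∉ J, d s < i s → D i = 0) :
    localTaylor St N D h 0 ∈ FNJ St M J d := by
  have hvanish {j : S → ℕ} (hj : ¬ ∀ s ∉ J, j s ≤ d s) (x : O) : localTaylor St N D h j x = 0 := by
    push Not at hj
    obtain ⟨s, hsJ, hs⟩ := hj
    exact localTaylor_eq_zero_of_forall_le
      (fun i hi hji ↦ hD i hi s hsJ (hs.trans_le (hji s))) x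
  have hsub : (Idx S N).filter (fun i ↦ ∀ s ∉ J, i s ≤ d s) ⊆
      (Idx S M).filter (fun i ↦ ∀ s ∉ J, i s ≤ d s) :=
    Finset.filter_subset_filter _ fun i hi ↦ mem_Idx.2 ((mem_Idx.1 hi).trans hNM)
  refine ⟨h, fun a ↦ ⟨fun j ↦ if j ∈ Idx S N then localTaylor St N D h j a else 0, fun y ↦ ?_⟩⟩
  rw [localTaylor_zero_index_add (dvd_mul_right _ y), ← Finset.sum_subset hsub, Finset.sum_filter]
  · refine Finset.sum_congr rfl fun j hj ↦ ?_
    split_ifs with hdeg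
    · simp only [hj, if_true]
    · rw [hvanish hdeg, zero_mul]
  · intro j hj hj'
    have hjN : j ∉ Idx S N := fun hjN ↦ hj' (Finset.mem_filter.2 ⟨hjN, (Finset.mem_filter.1 hj).2⟩)
    simp only [hjN, if_false, zero_mul]

lemma exists_forall_norm_localTaylor_le (hD : ∀ i ∈ Idx S N, ∃ C : ℝ, ∀ x, ‖D i x‖ ≤ C)
    (h : ℕ) (j : S → ℕ) : ∃ C : ℝ, ∀ x, ‖localTaylor St N D h j x‖ ≤ C := by
  choose! C hC using hD
  refine ⟨∑ i ∈ Idx S N, C i / ‖(mfact i : E)‖ * ‖(mchoose i j : E)‖, fun x ↦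
    norm_sum_le_of_le _ fun i hi ↦ ?_⟩
  rw [norm_mul, norm_mul, norm_div]
  gcongr
  · exact div_nonneg ((norm_nonneg _).trans (hC i hi 0)) (norm_nonneg _)
  · exact hC i hi _
  · exact mul_le_of_le_one_right (norm_nonneg _) (norm_mpow_le_one St _ _)

end LocalTaylor

end ArbitraryCharacteristic

omit [DecidableEq S] in
theorem linearIndependent_mpow (St : Setting S O E) :
    LinearIndependent E fun (i : S → ℕ) (z : O) ↦ mpow St z i :=
  linearIndependent_prod_pow St.emb_distinct

lemma exists_coeffBound (St : Setting S O E) (N : ℕ) :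
    ∃ C > 0, ∀ (c : (S → ℕ) → E) (b : ℝ), (∀ z, ‖∑ i ∈ Idx S N, c i * mpow St z i‖ ≤ b) →
      ∀ i ∈ Idx S N, ‖c i‖ ≤ C * b := by
  obtain ⟨C, hC, h⟩ := exists_norm_coeff_le_of_linearIndependent
    ((linearIndependent_mpow St).comp ((↑) : Idx S N → S → ℕ) Subtype.val_injective)
  refine ⟨C, hC, fun c b hb i hi ↦ h (fun k ↦ c k) b (fun z ↦ ?_) ⟨i, hi⟩⟩
  simpa only [Function.comp_apply, Finset.sum_coe_sort (Idx S N) fun k ↦ c k * mpow St z k]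
    using hb z

/-- A constant bounding the coefficients of every polynomial `∑_{|i|≤N} c_i z^i` in terms of its
supremum norm on `O`. -/
def coeffBound (St : Setting S O E) (N : ℕ) : ℝ := (exists_coeffBound St N).choose

section DerivativeBounds

variable {St : Setting S O E} {N h : ℕ} {b : ℝ}

lemma coeffBound_pos (St : Setting S O E) (N : ℕ) : 0 < coeffBound St N :=
  (exists_coeffBound St N).choose_spec.1

lemma norm_coeff_mul_le_of_forall_dvd {c : (S → ℕ) → E} {i : S → ℕ} (hi : i ∈ Idx S N)
    (hb : ∀ y, St.ϖ ^ h ∣ y → ‖∑ k ∈ Idx S N, c k * mpow St y k‖ ≤ b) :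
    ‖c i‖ * (St.q⁻¹ ^ h) ^ wt i ≤ coeffBound St N * b := by
  have hscaled := (exists_coeffBound St N).choose_spec.2 (fun k ↦ c k * mpow St (St.ϖ ^ h) k) b
    (fun z ↦ by simpa only [mpow_mul, mul_assoc] using hb _ (dvd_mul_right _ z)) i hi
  rwa [norm_mul, norm_mpow_uniformizer_pow] at hscaled

/- As a function of `w`, the difference of remainders `ε(x, y + w) - ε(x + y, w)` is a polynomial
whose coefficients are the remainders of the derivatives. -/
lemma norm_derivRem_mul_le {f : O → E} {D : (S → ℕ) → O → E}
    (hb : ∀ x y, St.ϖ ^ h ∣ y → ‖epsTay St N f D x y‖ ≤ b) {y : O} (hy : St.ϖ ^ h ∣ y)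
    {j : S → ℕ} (hj : j ∈ Idx S N) (x : O) :
    ‖derivRem St N D j x y‖ * (St.q⁻¹ ^ h) ^ wt j ≤ coeffBound St N * b := by
  refine norm_coeff_mul_le_of_forall_dvd (c := fun j ↦ derivRem St N D j x y) hj fun w hw ↦ ?_
  rw [← epsTay_add_sub_epsTay St N f D x y w]
  exact (St.norm_sub_le_max _ _).trans
    (max_le (hb x _ (dvd_add hy hw)) (hb _ w hw))

end DerivativeBounds

section VanishingDerivatives

variable {St : Setting S O E} {r : ℝ} {f : O → E} {D : (S → ℕ) → O → E} {h : ℕ} {δ : ℝ}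

/- If `D e = 0`, the remainder of the `e`-th derivative is, up to sign, the polynomial with
coefficients `D i x / i! * (i choose e)`, `i ≥ e`; its smallness near `x` makes these small. -/
lemma RemainderBound.norm_coeff_le_of_eq_zero (hr : 0 ≤ r)
    (hb : RemainderBound St r f D h δ) {e i : S → ℕ} (he : e ∈ Idx S ⌊r⌋₊) (hDe : D e = 0)
    (hi : i ∈ Idx S ⌊r⌋₊) (x : O) :
    ‖D i x / (mfact i : E) * (mchoose i e : E)‖ ≤
      coeffBound St ⌊r⌋₊ * (coeffBound St ⌊r⌋₊ * δ) := by
  have hδ := hb.nonneg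
  have hK := coeffBound_pos St ⌊r⌋₊
  have hpoly (y : O) (hy : St.ϖ ^ h ∣ y) :
      ‖∑ k ∈ Idx S ⌊r⌋₊, D k x / (mfact k : E) * (mchoose k e : E) * mpow St y k‖ ≤
        coeffBound St ⌊r⌋₊ * (δ * (St.q⁻¹ ^ h) ^ r) := by
    have hrem := norm_derivRem_mul_le (hb h le_rfl) hy he x
    rw [derivRem, hDe, Pi.zero_apply, zero_div, zero_sub, norm_neg] at hrem
    rw [← taylorDeriv_mul_mpow, norm_mul]
    exact le_trans (by gcongr; exact norm_mpow_le_of_dvd St hy e) hrem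
  have hcoeff := norm_coeff_mul_le_of_forall_dvd
    (c := fun k ↦ D k x / (mfact k : E) * (mchoose k e : E)) hi hpoly
  simpa using mul_pow_le_mul_rpow_of_le (St.inv_q_pow_pos h)
    (b := coeffBound St ⌊r⌋₊ * (coeffBound St ⌊r⌋₊ * δ)) (by positivity)
    (wt_le_of_mem_Idx_floor hr hi) (St.inv_q_pow_le_one h)
    (hcoeff.trans_eq (by ring))

theorem IsCrWith.deriv_eq_zero_of_le (hf : IsCrWith St r f D) (hr : 0 ≤ r)
    {e i : S → ℕ} (hDe : D e = 0) (hei : e ≤ i) (hi : i ∈ Idx S ⌊r⌋₊) : D i = 0 := by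
  have he : e ∈ Idx S ⌊r⌋₊ := mem_Idx.2 ((wt_mono hei).trans (mem_Idx.1 hi))
  have hK := coeffBound_pos St ⌊r⌋₊
  funext x
  have hcoeff : D i x / (mfact i : E) * (mchoose i e : E) = 0 := by
    refine norm_le_zero_iff.1 (le_of_forall_pos_le_add fun η hη ↦ ?_)
    obtain ⟨h, hb⟩ := hf.exists_remainderBound
      (show 0 < η / (coeffBound St ⌊r⌋₊ * coeffBound St ⌊r⌋₊) by positivity)
    refine (hb.norm_coeff_le_of_eq_zero hr he hDe hi x).trans_eq ?_
    field_simp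
    ring
  have hchoose : (mchoose i e : E) ≠ 0 := Nat.cast_ne_zero.2 (mchoose_ne_zero_iff.2 hei)
  exact (div_eq_zero_iff.1 ((mul_eq_zero.1 hcoeff).resolve_right hchoose)).resolve_right
    (mfact_ne_zero i)

lemma IsCrWith.deriv_eq_zero_of_lt_apply (hf : IsCrWith St r f D) (hr : 0 ≤ r)
    {J : Set S} {d : S → ℕ} (hvan : ∀ s ∉ Jp J d r, D (Pi.single s (d s + 1)) = 0)
    {i : S → ℕ} (hi : i ∈ Idx S ⌊r⌋₊) {s : S} (hsJ : s ∉ J) (hs : d s < i s) : D i = 0 := by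
  have hdr : (d s : ℝ) + 1 ≤ r := calc
    (d s : ℝ) + 1 ≤ wt i := mod_cast hs.trans_le (apply_le_wt i s)
    _ ≤ r := wt_le_of_mem_Idx_floor hr hi
  have hle : Pi.single s (d s + 1) ≤ i := by
    intro t
    obtain rfl | hts := eq_or_ne t s
    · simpa using hs
    · simp [hts]
  refine hf.deriv_eq_zero_of_le hr (hvan s ?_) hle hi
  rintro (hs' | hs')
  exacts [hsJ hs', hdr.not_gt hs']

end VanishingDerivatives

section Approximation

variable {St : Setting S O E} {N h : ℕ} {r δ : ℝ} {f : O → E} {D : (S → ℕ) → O → E}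

lemma errDeriv_div_mfact (j : S → ℕ) (x : O) :
    errDeriv St N D h j x / (mfact j : E) =
      derivRem St N D j (residueRep (St.ϖ ^ h) x) (x - residueRep (St.ϖ ^ h) x) := by
  rw [errDeriv, sub_div, mul_div_cancel_left₀ _ (mfact_ne_zero j), derivRem, add_sub_cancel]
  rfl

lemma epsTay_sub_localTaylor {y : O} (hy : St.ϖ ^ h ∣ y) (x : O) :
    epsTay St N (fun z ↦ f z - localTaylor St N D h 0 z) (errDeriv St N D h) x y =
      epsTay St N f D x y := by
  simp only [epsTay, localTaylor_zero_index_add hy, errDeriv, sub_mul, sub_div,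
    Finset.sum_sub_distrib, mul_assoc, mul_div_cancel_left₀ _ (mfact_ne_zero (K := E) _)]
  ring

lemma IsCrWith.sub_localTaylor (hf : IsCrWith St r f D) (h : ℕ) :
    IsCrWith St r (fun z ↦ f z - localTaylor St ⌊r⌋₊ D h 0 z) (errDeriv St ⌊r⌋₊ D h) := by
  constructor
  · intro j hj
    obtain ⟨A, hA⟩ := hf.1 j hj
    obtain ⟨B, hB⟩ := exists_forall_norm_localTaylor_le (St := St) hf.1 h j
    refine ⟨A + ‖(mfact j : E)‖ * B, fun x ↦ (norm_sub_le _ _).trans ?_⟩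
    rw [norm_mul]
    gcongr
    exacts [hA x, hB x]
  · intro ε hε
    obtain ⟨M, hM⟩ := hf.2 ε hε
    refine ⟨max M h, fun n hn x z ↦ ?_⟩
    have hdvd : St.ϖ ^ h ∣ St.ϖ ^ n * z :=
      (pow_dvd_pow _ ((le_max_right _ _).trans hn)).mul_right z
    rw [epsTay_sub_localTaylor hdvd]
    exact hM n ((le_max_left _ _).trans hn) x z

lemma RemainderBound.norm_errDeriv_div_mul_le (hb : RemainderBound St r f D h δ) (hr : 0 ≤ r)
    {j : S → ℕ} (hj : j ∈ Idx S ⌊r⌋₊) {v : ℝ} (hv : St.q⁻¹ ^ h ≤ v) (x : O) :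
    ‖errDeriv St ⌊r⌋₊ D h j x / (mfact j : E)‖ * v ^ wt j ≤ coeffBound St ⌊r⌋₊ * δ * v ^ r := by
  refine mul_pow_le_mul_rpow_of_le (St.inv_q_pow_pos h)
    (mul_nonneg (coeffBound_pos St _).le hb.nonneg) (wt_le_of_mem_Idx_floor hr hj) hv ?_
  rw [errDeriv_div_mfact, mul_assoc]
  exact norm_derivRem_mul_le (hb h le_rfl) (dvd_sub_residueRep _ x) hj _

lemma RemainderBound.norm_epsTay_sub_localTaylor_div_le_of_not_dvd
    (hb : RemainderBound St r f D h δ) (hf : IsCrWith St r f D) (hr : 0 ≤ r) {y : O}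
    (hy : ¬ St.ϖ ^ h ∣ y) (x : O) :
    ‖epsTay St ⌊r⌋₊ (fun z ↦ f z - localTaylor St ⌊r⌋₊ D h 0 z) (errDeriv St ⌊r⌋₊ D h) x y‖ /
      St.ν y ^ r ≤ coeffBound St ⌊r⌋₊ * δ := by
  have := St.isUltrametricDist
  have hν : St.q⁻¹ ^ h < St.ν y := not_le.1 (mt St.uniformizer_pow_dvd_iff.2 hy)
  have hν₀ : 0 < St.ν y := (St.inv_q_pow_pos h).trans hν
  have hδ := hb.nonneg
  have hK := coeffBound_pos St ⌊r⌋₊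
  rw [div_le_iff₀ (by positivity), epsTay_eq_sub_taylorDeriv, taylorDeriv_zero_index,
    ← (hf.sub_localTaylor h).deriv_zero_index hr]
  refine (St.norm_sub_le_max _ _).trans (max_le ?_ ?_)
  · simpa [wt, mfact] using
      hb.norm_errDeriv_div_mul_le hr (zero_mem_Idx _) hν.le (x + y)
  · refine IsUltrametricDist.norm_sum_le_of_forall_le_of_nonneg (by positivity) fun j hj ↦ ?_
    rw [norm_mul, norm_mpow]
    exact hb.norm_errDeriv_div_mul_le hr hj hν.le x

theorem RemainderBound.CrNorm_sub_localTaylor_le (hb : RemainderBound St r f D h δ)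
    (hf : IsCrWith St r f D) (hr : 0 ≤ r) :
    CrNorm St r (fun z ↦ f z - localTaylor St ⌊r⌋₊ D h 0 z) (errDeriv St ⌊r⌋₊ D h) ≤
      max (St.q ^ r) (coeffBound St ⌊r⌋₊) * δ := by
  have hδ := hb.nonneg
  have hC : 0 ≤ max (St.q ^ r) (coeffBound St ⌊r⌋₊) * δ :=
    mul_nonneg (le_max_of_le_right (coeffBound_pos St _).le) hδ
  refine max_le (Real.iSup_le (fun j ↦ Real.iSup_le (fun x ↦ ?_) hC) hC)
    (Real.iSup_le (fun x ↦ Real.iSup_le (fun y ↦ ?_) hC) hC)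
  · have hderiv := hb.norm_errDeriv_div_mul_le hr j.2 (St.inv_q_pow_le_one h) x
    rw [one_pow, mul_one, Real.one_rpow, mul_one] at hderiv
    exact hderiv.trans (by gcongr; exact le_max_right _ _)
  · by_cases hy : St.ϖ ^ h ∣ y
    · rw [epsTay_sub_localTaylor hy]
      exact (hb.norm_epsTay_div_le_of_dvd hf hr hy x).trans (by gcongr; exact le_max_left _ _)
    · exact (hb.norm_epsTay_sub_localTaylor_div_le_of_not_dvd hf hr hy x).trans
        (by gcongr; exact le_max_right _ _)

end Approximation

theorem statement16_general (St : Setting S O E) (J : Set S) (d : S → ℕ)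
    (r : ℝ) (hr : 0 ≤ r) (N : ℕ) (hN : ⌊r⌋₊ ≤ N)
    (f : O → E) (D : (S → ℕ) → O → E)
    (hf : IsCrWith St r f D)
    (hvan : ∀ s ∉ Jp J d r, D (Pi.single s (d s + 1)) = 0) :
    ∀ ε : ℝ, 0 < ε → ∃ g ∈ FNJ St N J d, ∃ D' : (S → ℕ) → O → E,
      IsCrWith St r (fun z => f z - g z) D' ∧
      CrNorm St r (fun z => f z - g z) D' ≤ ε := by
  intro ε hε
  have hC : 0 < max (St.q ^ r) (coeffBound St ⌊r⌋₊) := lt_max_of_lt_right (coeffBound_pos St _)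
  obtain ⟨h, hb⟩ := hf.exists_remainderBound (div_pos hε hC)
  have hmem : localTaylor St ⌊r⌋₊ D h 0 ∈ FNJ St N J d :=
    localTaylor_mem_FNJ hN fun i hi s hsJ hs ↦ hf.deriv_eq_zero_of_lt_apply hr hvan hi hsJ hs
  exact ⟨_, hmem, _, hf.sub_localTaylor h,
    (hb.CrNorm_sub_localTaylor_le hf hr).trans_eq (mul_div_cancel₀ ε hC.ne')⟩

end General

/-- for `N ≥ [r]`, the space `𝓕^N(O, J, (d_σ)_{σ∈S∖J})` is dense in
`C^r(O, J', (d_σ)_{σ∈S∖J'})`. -/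
theorem statement16 (St : Setting S O E) (J : Set S) (d : S → ℕ)
    (r : ℝ) (hr : 0 ≤ r) (N : ℕ) (hN : ⌊r⌋₊ ≤ N)
    (f : O → E) (D : (S → ℕ) → O → E)
    (hf : IsCrWith St r f D)
    (hvan : ∀ s ∉ Jp J d r, D (Pi.single s (d s + 1)) = 0) :
    ∀ ε : ℝ, 0 < ε → ∃ g ∈ FNJ St N J d, ∃ D' : (S → ℕ) → O → E,
      IsCrWith St r (fun z => f z - g z) D' ∧
      CrNorm St r (fun z => f z - g z) D' ≤ ε :=
  statement16_general St J d r hr N hN f D hf hvan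

end CrPaper
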